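/- Fix N ≥ 1 and write a = 1/2^N; suppose ‖(t,s) − (t',s')‖_2 ≤ 1 for all (t,s),(t',s') ∈ SG' × SG''. Let f : SG' × SG'' → ℝ be the continuous function satisfying f(L_ω(t),K_η(s)) = α_{ωη}(t,s)·f(t,s) + h_{ωη}(t,s) for all ω,η ∈ I^N and (t,s) ∈ SG' × SG''. Suppose each h_{ωη} is Hölder continuous with exponent s_h ∈ (0,1] and constant K_h, and each α_{ωη} is Hölder continuous with exponent s_{α_{ωη}} ∈ (0,1] and constant K_{α_{ωη}}, with ‖α_{ωη}‖_∞ < 1. Set ‖α‖_∞ = max_{ω,η ∈ I^N} ‖α_{ωη}‖_∞, s_α = min_{ω,η} s_{α_{ωη}}, and s = min{s_h, s_α}. If ‖α‖_∞ = 1/2^N, then there exists μ with 0 < μ < s such that f is Hölder continuous with exponent s − μ: there is a constant C with |f(t,s) − f(t',s')| ≤ C·‖(t,s)−(t',s')‖_2^{s−μ} for all points of SG' × SG''. -/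

import Mathlib

noncomputable section

/-- Points of the plane ℝ². -/
abbrev E2 := EuclideanSpace ℝ (Fin 2)

/-- The contraction `L_i(t) = (t + p_i)/2` of the plane towards the vertex `p i`. -/
def Lmap (p : Fin 3 → E2) (i : Fin 3) (t : E2) : E2 := (2 : ℝ)⁻¹ • (t + p i)

/-- `p 1, p 2, p 3` are the vertices of an equilateral triangle: pairwise distinct
points with all three pairwise distances equal. -/
def IsEquilateral (p : Fin 3 → E2) : Prop :=
  Function.Injective p ∧
    ∀ i j k l : Fin 3, i ≠ j → k ≠ l → dist (p i) (p j) = dist (p k) (p l)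

/-- `S` is the Sierpiński gasket with vertex set `p`: the unique nonempty compact set
invariant under the three contractions `L_i(t) = (t + p_i)/2`. -/
def IsSG (p : Fin 3 → E2) (S : Set E2) : Prop :=
  IsEquilateral p ∧ S.Nonempty ∧ IsCompact S ∧ S = ⋃ i : Fin 3, Lmap p i '' S

/-- For a word `ω = ω₁ω₂…ω_n` over `I = {1,2,3}`, the composition
`L_ω = L_{ω₁} ∘ L_{ω₂} ∘ ⋯ ∘ L_{ω_n}`. -/
def wordMap (p : Fin 3 → E2) {n : ℕ} (ω : Fin n → Fin 3) : E2 → E2 :=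
  (List.ofFn fun k => Lmap p (ω k)).foldr (· ∘ ·) id

/-- The word alphabet `I^N`: words of length `N` over `I = {1,2,3}`. -/
abbrev Word (N : ℕ) := Fin N → Fin 3

/-- The Euclidean (`ℓ²`) distance `‖(t,s) − (t',s')‖₂` on the product `ℝ² × ℝ²`. -/
def dist2 (x y : E2 × E2) : ℝ := Real.sqrt (dist x.1 y.1 ^ 2 + dist x.2 y.2 ^ 2)

/-- `g` is Hölder continuous on `S` with constant `K` and exponent `β` (with respect
to the Euclidean distance on `ℝ² × ℝ²`). -/
def HolderOn2 (S : Set (E2 × E2)) (g : E2 × E2 → ℝ) (K β : ℝ) : Prop :=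
  ∀ x ∈ S, ∀ y ∈ S, |g x - g y| ≤ K * dist2 x y ^ β

/-- The sup-norm `‖g‖_∞ = sup_{x ∈ S} |g x|` of a function on `S`. -/
noncomputable def supAbs (S : Set (E2 × E2)) (g : E2 × E2 → ℝ) : ℝ :=
  sSup ((fun x => |g x|) '' S)

/-- `t` and `v` lie in a common cell of level `m`. -/
def SameCell (p : Fin 3 → E2) (S : Set E2) : ℕ → E2 → E2 → Prop
  | 0, t, v => t ∈ S ∧ v ∈ S
  | m + 1, t, v => ∃ i u w, SameCell p S m u w ∧ t = Lmap p i u ∧ v = Lmap p i w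

lemma IsSG.mem_Lmap {p S} (h : IsSG p S) (i : Fin 3) {t : E2} (ht : t ∈ S) : Lmap p i t ∈ S := by
  rw [h.2.2.2]
  exact Set.mem_iUnion.2 ⟨i, t, ht, rfl⟩

lemma IsSG.exists_pre {p S} (h : IsSG p S) {t : E2} (ht : t ∈ S) :
    ∃ i, ∃ u ∈ S, t = Lmap p i u := by
  rw [h.2.2.2] at ht
  obtain ⟨i, u, hu, rfl⟩ := Set.mem_iUnion.1 ht
  exact ⟨i, u, hu, rfl⟩

lemma dist_Lmap (p : Fin 3 → E2) (i : Fin 3) (t u : E2) :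
    dist (Lmap p i t) (Lmap p i u) = dist t u / 2 := by
  simp only [Lmap, dist_smul₀, dist_add_right]
  rw [Real.norm_of_nonneg (by norm_num)]
  ring

lemma Lmap_self (p : Fin 3 → E2) (i : Fin 3) : Lmap p i (p i) = p i := by
  simp only [Lmap]
  rw [← two_smul ℝ (p i), smul_smul]
  norm_num

lemma IsSG.vertex_mem {p S} (h : IsSG p S) (i : Fin 3) : p i ∈ S := by
  obtain ⟨x, hx, hmin⟩ := h.2.2.1.exists_isMinOn h.2.1
    (f := fun x => dist x (p i)) (by fun_prop)
  have h1 : dist x (p i) ≤ dist (Lmap p i x) (p i) := hmin (h.mem_Lmap i hx)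
  have h2 := dist_Lmap p i x (p i)
  rw [Lmap_self] at h2
  have : dist x (p i) = 0 := le_antisymm (by linarith) dist_nonneg
  rw [dist_eq_zero] at this
  exact this ▸ hx

lemma SameCell.mem {p S} (h : IsSG p S) : ∀ {m : ℕ} {t v : E2}, SameCell p S m t v → t ∈ S ∧ v ∈ S
  | 0, _, _, hs => hs
  | m + 1, _, _, hs => by
    obtain ⟨i, u, w, hs, rfl, rfl⟩ := hs
    exact ⟨h.mem_Lmap i (SameCell.mem h hs).1, h.mem_Lmap i (SameCell.mem h hs).2⟩

lemma SameCell.symm' {p S} : ∀ {m : ℕ} {t v : E2}, SameCell p S m t v → SameCell p S m v t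
  | 0, _, _, hs => ⟨hs.2, hs.1⟩
  | m + 1, _, _, hs => by
    obtain ⟨i, u, w, hs, rfl, rfl⟩ := hs
    exact ⟨i, w, u, SameCell.symm' hs, rfl, rfl⟩

lemma SameCell.dist_le {p S} (hd : ∀ x ∈ S, ∀ y ∈ S, dist x y ≤ 1) :
    ∀ {m : ℕ} {t v : E2}, SameCell p S m t v → dist t v ≤ (1 / 2) ^ m
  | 0, _, _, hs => by simpa using hd _ hs.1 _ hs.2
  | m + 1, _, _, hs => by
    obtain ⟨i, u, w, hs, rfl, rfl⟩ := hs
    rw [dist_Lmap, pow_succ]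
    have := SameCell.dist_le hd hs
    linarith

lemma wordMap_cons (p : Fin 3 → E2) {n : ℕ} (i : Fin 3) (ω : Fin n → Fin 3) (t : E2) :
    wordMap p (Fin.cons i ω : Fin (n + 1) → Fin 3) t = Lmap p i (wordMap p ω t) := by
  simp [wordMap, List.ofFn_succ]

lemma SameCell.word {p S} : ∀ (N : ℕ) {m : ℕ} {t v : E2}, SameCell p S (m + N) t v →
    ∃ ω : Word N, ∃ u w, SameCell p S m u w ∧ t = wordMap p ω u ∧ v = wordMap p ω w
  | 0, m, t, v, hs => ⟨Fin.elim0, t, v, hs, by simp [wordMap], by simp [wordMap]⟩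
  | N + 1, m, t, v, hs => by
    obtain ⟨i, u, w, hs, rfl, rfl⟩ := hs
    obtain ⟨ω, u', w', hs2, rfl, rfl⟩ := SameCell.word N hs
    exact ⟨Fin.cons i ω, u', w', hs2, by rw [wordMap_cons], by rw [wordMap_cons]⟩

/-- Affine functional vanishing at the vertex `p i` and constant on the opposite side. -/
def Afun (p : Fin 3 → E2) (i : Fin 3) (t : E2) : ℝ := inner ℝ (t - p i) (∑ j, (p j - p i))

lemma Afun_Lmap (p : Fin 3 → E2) (i j : Fin 3) (t : E2) :
    Afun p i (Lmap p j t) = (Afun p i t + Afun p i (p j)) / 2 := by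
  have : Lmap p j t - p i = (2 : ℝ)⁻¹ • ((t - p i) + (p j - p i)) := by
    simp only [Lmap]; module
  simp only [Afun, this, inner_smul_left, inner_add_left]
  simp
  ring

lemma Afun_self (p : Fin 3 → E2) (i : Fin 3) : Afun p i (p i) = 0 := by simp [Afun]

lemma Afun_vertex {p : Fin 3 → E2} (h : IsEquilateral p) {i j : Fin 3} (hij : i ≠ j) :
    Afun p i (p j) = 3 / 2 * dist (p 0) (p 1) ^ 2 := by
  have key : ∀ a b c : E2, inner ℝ (b - a) (c - a)
      = (dist a b ^ 2 + dist a c ^ 2 - dist b c ^ 2) / 2 := by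
    intro a b c
    have := norm_sub_sq_real (b - a) (c - a)
    rw [sub_sub_sub_cancel_right] at this
    rw [dist_comm a b, dist_comm a c, dist_eq_norm, dist_eq_norm, dist_eq_norm]
    linarith
  have e : ∀ k l : Fin 3, k ≠ l → dist (p k) (p l) = dist (p 0) (p 1) := fun k l hkl =>
    h.2 k l 0 1 hkl (by decide)
  have e01 := e 1 0 (by decide)
  have e02 := e 0 2 (by decide)
  have e20 := e 2 0 (by decide)
  have e12 := e 1 2 (by decide)
  have e21 := e 2 1 (by decide)
  simp only [Afun, Fin.sum_univ_three, inner_add_right, key]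
  fin_cases i <;> fin_cases j <;> simp_all <;> ring

lemma Afun_nonneg {p S} (h : IsSG p S) (i : Fin 3) {t : E2} (ht : t ∈ S) : 0 ≤ Afun p i t := by
  obtain ⟨x, hx, hmin⟩ := h.2.2.1.exists_isMinOn h.2.1
    (f := fun x => Afun p i x) (by unfold Afun; fun_prop)
  refine le_trans ?_ (hmin ht)
  obtain ⟨j, u, hu, rfl⟩ := h.exists_pre hx
  have h1 : Afun p i (Lmap p j u) ≤ Afun p i u := hmin hu
  have h2 := Afun_Lmap p i j u
  have h3 : 0 ≤ Afun p i (p j) := by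
    by_cases hij : i = j
    · rw [hij, Afun_self]
    · rw [Afun_vertex h.1 hij]; positivity
  show 0 ≤ Afun p i (Lmap p j u)
  linarith

lemma Afun_le {p S} (h : IsSG p S) (i : Fin 3) {t : E2} (ht : t ∈ S) :
    Afun p i t ≤ 3 / 2 * dist (p 0) (p 1) ^ 2 := by
  obtain ⟨x, hx, hmax⟩ := h.2.2.1.exists_isMaxOn h.2.1
    (f := fun x => Afun p i x) (by unfold Afun; fun_prop)
  refine le_trans (hmax ht) ?_
  obtain ⟨j, u, hu, rfl⟩ := h.exists_pre hx
  have h1 : Afun p i u ≤ Afun p i (Lmap p j u) := hmax hu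
  have h2 := Afun_Lmap p i j u
  have h3 : Afun p i (p j) ≤ 3 / 2 * dist (p 0) (p 1) ^ 2 := by
    by_cases hij : i = j
    · rw [hij, Afun_self]; positivity
    · rw [Afun_vertex h.1 hij]
  show Afun p i (Lmap p j u) ≤ _
  linarith

/-- Points near a vertex lie in the small cell at this vertex. -/
lemma sameCell_vertex {p S} (h : IsSG p S) (i : Fin 3) : ∀ (m : ℕ) {t : E2}, t ∈ S →
    Afun p i t < 3 / 2 * dist (p 0) (p 1) ^ 2 * (1 / 2) ^ m → SameCell p S m t (p i)
  | 0, t, ht, _ => ⟨ht, h.vertex_mem i⟩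
  | m + 1, t, ht, hA => by
    obtain ⟨j, u, hu, rfl⟩ := h.exists_pre ht
    have h2 := Afun_Lmap p i j u
    have h0 := Afun_nonneg h i hu
    have hij : i = j := by
      by_contra hij
      rw [Afun_vertex h.1 hij] at h2
      have : (1 / 2 : ℝ) ^ (m + 1) ≤ 1 / 2 := by
        rw [pow_succ]
        have : (1 / 2 : ℝ) ^ m ≤ 1 := pow_le_one₀ (by norm_num) (by norm_num)
        linarith
      have := mul_le_mul_of_nonneg_left this
        (show 0 ≤ 3 / 2 * dist (p 0) (p 1) ^ 2 by positivity)
      linarith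
    subst hij
    rw [Afun_self] at h2
    refine ⟨i, u, p i, sameCell_vertex h i m hu ?_, rfl, (Lmap_self p i).symm⟩
    rw [pow_succ (1 / 2 : ℝ) m] at hA
    linarith

/-- Two close points lie in the same or in adjacent cells. -/
lemma adjacent {p S} (h : IsSG p S) : ∀ (m : ℕ) {t t' : E2}, t ∈ S → t' ∈ S →
    (∀ j, |Afun p j t - Afun p j t'| < 3 / 2 * dist (p 0) (p 1) ^ 2 * (1 / 2) ^ m) →
    ∃ v, SameCell p S m t v ∧ SameCell p S m t' v
  | 0, t, t', ht, ht', _ => ⟨t, ⟨ht, ht⟩, ⟨ht', ht⟩⟩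
  | m + 1, t, t', ht, ht', hA => by
    obtain ⟨i, u, hu, rfl⟩ := h.exists_pre ht
    obtain ⟨j, u', hu', rfl⟩ := h.exists_pre ht'
    simp only [Afun_Lmap, pow_succ (1 / 2 : ℝ) m] at hA
    by_cases hij : i = j
    · subst hij
      obtain ⟨v, h1, h2⟩ := adjacent h m hu hu' (by
        intro k
        have := hA k
        rw [abs_lt] at this ⊢
        constructor <;> linarith)
      exact ⟨Lmap p i v, ⟨i, u, v, h1, rfl, rfl⟩, ⟨i, u', v, h2, rfl, rfl⟩⟩
    · refine ⟨Lmap p i (p j), ⟨i, u, p j, sameCell_vertex h j m hu ?_, rfl, rfl⟩,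
        ⟨j, u', p i, sameCell_vertex h i m hu' ?_, rfl, ?_⟩⟩
      · have := (abs_lt.1 (hA j)).2
        rw [Afun_self, Afun_vertex h.1 (Ne.symm hij)] at this
        have := Afun_le h j hu'
        linarith
      · have := (abs_lt.1 (hA i)).1
        rw [Afun_self, Afun_vertex h.1 hij] at this
        have := Afun_le h i hu
        linarith
      · simp only [Lmap, add_comm]

lemma exists_adjacent {p S} (h : IsSG p S) : ∃ c : ℝ, 0 < c ∧ ∀ (m : ℕ) (t t' : E2), t ∈ S → t' ∈ S →
    dist t t' ≤ c * (1 / 2) ^ m → ∃ v, SameCell p S m t v ∧ SameCell p S m t' v := by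
  obtain ⟨D, hDi⟩ : ∃ D : ℝ, ∀ i, ‖∑ j, (p j - p i)‖ < D := by
    refine ⟨1 + ∑ i, ‖∑ j, (p j - p i)‖, fun i => ?_⟩
    have := Finset.single_le_sum (f := fun i => ‖∑ j, (p j - p i)‖)
      (fun i _ => norm_nonneg _) (Finset.mem_univ i)
    linarith
  have hD0 : 0 < D := (norm_nonneg _).trans_lt (hDi 0)
  have hd : 0 < dist (p 0) (p 1) := dist_pos.2 fun e => by
    have := h.1.1 e
    simp at this
  refine ⟨3 / 2 * dist (p 0) (p 1) ^ 2 / D, by positivity, fun m t t' ht ht' hdist => ?_⟩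
  refine adjacent h m ht ht' fun j => ?_
  have e : Afun p j t - Afun p j t' = inner ℝ (t - t') (∑ k, (p k - p j)) := by
    simp only [Afun]
    rw [← inner_sub_left, sub_sub_sub_cancel_right]
  rw [e]
  have hpos : 0 < 3 / 2 * dist (p 0) (p 1) ^ 2 * (1 / 2 : ℝ) ^ m := by positivity
  calc _ ≤ ‖t - t'‖ * ‖∑ k, (p k - p j)‖ := abs_real_inner_le_norm _ _
    _ = dist t t' * ‖∑ k, (p k - p j)‖ := by rw [dist_eq_norm]
    _ ≤ (3 / 2 * dist (p 0) (p 1) ^ 2 / D * (1 / 2) ^ m) * ‖∑ k, (p k - p j)‖ := by gcongr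
    _ < (3 / 2 * dist (p 0) (p 1) ^ 2 / D * (1 / 2) ^ m) * D := by
      have := hDi j
      gcongr
    _ = _ := by field_simp

lemma dist_fst_le (x y : E2 × E2) : dist x.1 y.1 ≤ dist2 x y :=
  Real.le_sqrt_of_sq_le (by nlinarith [sq_nonneg (dist x.2 y.2)])

lemma dist_snd_le (x y : E2 × E2) : dist x.2 y.2 ≤ dist2 x y :=
  Real.le_sqrt_of_sq_le (by nlinarith [sq_nonneg (dist x.1 y.1)])

lemma dist2_le_add (x y : E2 × E2) : dist2 x y ≤ dist x.1 y.1 + dist x.2 y.2 := by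
  rw [dist2, Real.sqrt_le_iff]
  have h1 : 0 ≤ dist x.1 y.1 := dist_nonneg
  have h2 : 0 ≤ dist x.2 y.2 := dist_nonneg
  exact ⟨by positivity, by nlinarith⟩

lemma dist2_nonneg (x y : E2 × E2) : 0 ≤ dist2 x y := Real.sqrt_nonneg _

lemma holder_main (p q : Fin 3 → E2) (SG' SG'' : Set E2)
    (hSG' : IsSG p SG') (hSG'' : IsSG q SG'') (N : ℕ) (hN : 1 ≤ N)
    (hdiam : ∀ x ∈ SG' ×ˢ SG'', ∀ y ∈ SG' ×ˢ SG'', dist2 x y ≤ 1)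
    (α h : Word N → Word N → E2 × E2 → ℝ)
    (f : E2 × E2 → ℝ) (hfc : ContinuousOn f (SG' ×ˢ SG''))
    (hf : ∀ ω η : Word N, ∀ t ∈ SG', ∀ s ∈ SG'',
      f (wordMap p ω t, wordMap q η s) = α ω η (t, s) * f (t, s) + h ω η (t, s))
    (β : ℝ) (hβ0 : 0 < β) (hβ1 : β < 1) (Kh Kα : ℝ) (hKh : 0 ≤ Kh) (hKα : 0 ≤ Kα)
    (hh : ∀ ω η, HolderOn2 (SG' ×ˢ SG'') (h ω η) Kh β)
    (hα : ∀ ω η, HolderOn2 (SG' ×ˢ SG'') (α ω η) Kα β)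
    (hαb : ∀ ω η, ∀ x ∈ SG' ×ˢ SG'', |α ω η x| ≤ (1 / 2) ^ N) :
    ∃ C : ℝ, HolderOn2 (SG' ×ˢ SG'') f C β := by
  have hd' : ∀ x ∈ SG', ∀ y ∈ SG', dist x y ≤ 1 := fun x hx y hy => by
    obtain ⟨z, hz⟩ := hSG''.2.1
    exact (dist_fst_le (x, z) (y, z)).trans (hdiam _ ⟨hx, hz⟩ _ ⟨hy, hz⟩)
  have hd'' : ∀ x ∈ SG'', ∀ y ∈ SG'', dist x y ≤ 1 := fun x hx y hy => by
    obtain ⟨z, hz⟩ := hSG'.2.1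
    exact (dist_snd_le (z, x) (z, y)).trans (hdiam _ ⟨hz, hx⟩ _ ⟨hz, hy⟩)
  obtain ⟨M, hM⟩ := (hSG'.2.2.1.prod hSG''.2.2.1).exists_bound_of_continuousOn hfc
  have hM0 : 0 ≤ M := by
    obtain ⟨z, hz⟩ := hSG'.2.1
    obtain ⟨w, hw⟩ := hSG''.2.1
    exact (norm_nonneg _).trans (hM (z, w) ⟨hz, hw⟩)
  set a : ℝ := (1 / 2) ^ N with ha
  have ha0 : 0 < a := by positivity
  have ha1 : a < 1 := pow_lt_one₀ (by norm_num) (by norm_num) (by omega)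
  have haβ : a < a ^ β := by
    simpa using Real.rpow_lt_rpow_of_exponent_gt ha0 ha1 hβ1
  set K : ℝ := (Kα * M + Kh) * 2 with hK
  have hK0 : 0 ≤ K := by positivity
  set C : ℝ := 2 * M + K / (a ^ β - a) with hC
  have hC1 : 2 * M ≤ C := by
    have : 0 ≤ K / (a ^ β - a) := div_nonneg hK0 (by linarith)
    linarith
  have hC2 : K ≤ C * (a ^ β - a) := by
    have h1 : K / (a ^ β - a) * (a ^ β - a) = K := div_mul_cancel₀ _ (by linarith)
    nlinarith
  have hC0 : 0 ≤ C := by linarith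
  have diff0 : ∀ x ∈ SG' ×ˢ SG'', ∀ y ∈ SG' ×ˢ SG'', |f x - f y| ≤ C := fun x hx y hy => by
    have h1 := hM x hx
    have h2 := hM y hy
    rw [Real.norm_eq_abs] at h1 h2
    have := abs_sub (f x) (f y)
    linarith
  have osc : ∀ (n : ℕ) (t v s w : E2), SameCell p SG' (n * N) t v → SameCell q SG'' (n * N) s w →
      |f (t, s) - f (v, w)| ≤ C * (a ^ n) ^ β := by
    intro n
    induction n with
    | zero =>
      intro t v s w h1 h2
      have h1 := h1.mem hSG'
      have h2 := h2.mem hSG''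
      simpa using diff0 (t, s) ⟨h1.1, h2.1⟩ (v, w) ⟨h1.2, h2.2⟩
    | succ n ih =>
      intro t v s w h1 h2
      rw [Nat.succ_mul] at h1 h2
      obtain ⟨ω, t, v, h1', rfl, rfl⟩ := SameCell.word N h1
      clear h1
      rename' h1' => h1
      obtain ⟨η, s, w, h2', rfl, rfl⟩ := SameCell.word N h2
      clear h2
      rename' h2' => h2
      have m1 := h1.mem hSG'
      have m2 := h2.mem hSG''
      have d1 := h1.dist_le hd'
      have d2 := h2.dist_le hd''
      have mx : (t, s) ∈ SG' ×ˢ SG'' := ⟨m1.1, m2.1⟩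
      have my : (v, w) ∈ SG' ×ˢ SG'' := ⟨m1.2, m2.2⟩
      have IH := ih t v s w h1 h2
      rw [hf ω η t m1.1 s m2.1, hf ω η v m1.2 w m2.2]
      have hdd : dist2 (t, s) (v, w) ^ β ≤ 2 * (a ^ n) ^ β := by
        have e : dist2 (t, s) (v, w) ≤ 2 * a ^ n := by
          have := dist2_le_add (t, s) (v, w)
          rw [ha, ← pow_mul, mul_comm N n]
          simp only at this
          linarith
        calc _ ≤ (2 * a ^ n) ^ β := Real.rpow_le_rpow (dist2_nonneg _ _) e hβ0.le
          _ = 2 ^ β * (a ^ n) ^ β := Real.mul_rpow (by norm_num) (by positivity)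
          _ ≤ 2 * (a ^ n) ^ β := by
            have : (2 : ℝ) ^ β ≤ 2 := by
              simpa using Real.rpow_le_rpow_of_exponent_le (x := 2) (by norm_num) hβ1.le
            gcongr
      have e1 := hh ω η _ mx _ my
      have e2 := hα ω η _ mx _ my
      have e3 := hαb ω η _ mx
      have e4 := hM _ my
      rw [Real.norm_eq_abs] at e4
      have eq : α ω η (t, s) * f (t, s) + h ω η (t, s) - (α ω η (v, w) * f (v, w) + h ω η (v, w))
        = α ω η (t, s) * (f (t, s) - f (v, w)) + (α ω η (t, s) - α ω η (v, w)) * f (v, w)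
          + (h ω η (t, s) - h ω η (v, w)) := by ring
      rw [eq]
      set X := (a ^ n) ^ β with hX
      have hX0 : 0 ≤ X := by positivity
      have hXs : (a ^ (n + 1)) ^ β = X * a ^ β := by
        rw [pow_succ, Real.mul_rpow (by positivity) ha0.le]
      rw [hXs]
      have t1 : |α ω η (t, s) * (f (t, s) - f (v, w))| ≤ a * (C * X) := by
        rw [abs_mul]; gcongr
      have t2 : |(α ω η (t, s) - α ω η (v, w)) * f (v, w)| ≤ (Kα * (2 * X)) * M := by
        rw [abs_mul]
        have : |α ω η (t, s) - α ω η (v, w)| ≤ Kα * (2 * X) := e2.trans (by gcongr)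
        gcongr
      have t3 : |h ω η (t, s) - h ω η (v, w)| ≤ Kh * (2 * X) := e1.trans (by gcongr)
      have t4 := abs_add_three (α ω η (t, s) * (f (t, s) - f (v, w)))
        ((α ω η (t, s) - α ω η (v, w)) * f (v, w)) (h ω η (t, s) - h ω η (v, w))
      have t5 := mul_le_mul_of_nonneg_right hC2 hX0
      have t6 : K * X = (Kα * (2 * X)) * M + Kh * (2 * X) := by rw [hK]; ring
      nlinarith
  obtain ⟨c', hc', H'⟩ := exists_adjacent hSG'
  obtain ⟨c'', hc'', H''⟩ := exists_adjacent hSG''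
  set c := min c' c'' with hc
  have hc0 : 0 < c := lt_min hc' hc''
  refine ⟨2 * C * ((a * c)⁻¹) ^ β, fun x hx y hy => ?_⟩
  rw [mul_assoc, ← Real.mul_rpow (by positivity) (dist2_nonneg _ _)]
  suffices hs : x = y ∨ ∃ n : ℕ, |f x - f y| ≤ 2 * C * (a ^ n) ^ β ∧ a ^ n ≤ (a * c)⁻¹ * dist2 x y by
    rcases hs with rfl | ⟨n, h1, h2⟩
    · rw [sub_self, abs_zero]
      have := dist2_nonneg x x
      positivity
    · exact h1.trans (by gcongr)
  by_cases hxy : x = y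
  · exact Or.inl hxy
  right
  have hd0 : 0 < dist2 x y := by
    by_contra hcon
    have h1 := dist_fst_le x y
    have h2 := dist_snd_le x y
    exact hxy (Prod.ext (dist_le_zero.1 (by linarith)) (dist_le_zero.1 (by linarith)))
  have heq : (a * c)⁻¹ * dist2 x y = (dist2 x y / c) / a := by field_simp
  rw [heq]
  by_cases hbig : 1 < dist2 x y / c
  · refine ⟨0, ?_, ?_⟩
    · have := diff0 x hx y hy
      simp; linarith
    · rw [pow_zero, le_div_iff₀ ha0]; linarith
  · obtain ⟨n, h1, h2⟩ := exists_nat_pow_near_of_lt_one (div_pos hd0 hc0) (not_lt.1 hbig) ha0 ha1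
    refine ⟨n, ?_, ?_⟩
    · rw [div_le_iff₀ hc0] at h2
      have han : a ^ n = (1 / 2) ^ (n * N) := by rw [ha, ← pow_mul, mul_comm]
      obtain ⟨v, v1, v2⟩ := H' (n * N) x.1 y.1 hx.1 hy.1 (by
        rw [← han]
        have : a ^ n * c ≤ a ^ n * c' := by gcongr; exact min_le_left _ _
        linarith [dist_fst_le x y])
      obtain ⟨w, w1, w2⟩ := H'' (n * N) x.2 y.2 hx.2 hy.2 (by
        rw [← han]
        have : a ^ n * c ≤ a ^ n * c'' := by gcongr; exact min_le_right _ _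
        linarith [dist_snd_le x y])
      have o1 := osc n _ _ _ _ v1 w1
      have o2 := osc n _ _ _ _ v2 w2
      have := abs_sub_le (f x) (f (v, w)) (f y)
      rw [abs_sub_comm (f (v, w)) (f y)] at this
      simp only [Prod.mk.eta] at o1 o2
      linarith
    · rw [le_div_iff₀ ha0, ← pow_succ]; exact h1.le

/-- If `‖α‖_∞ := max_{ω,η} ‖α_{ωη}‖_∞ = 1/2^N`, then the fractal interpolation
function `f` on `SG' × SG''` is Hölder continuous with exponent `s − μ` for some
`0 < μ < s`, where `s = min{s_h, s_α}`. -/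
theorem stmt_11 (p q : Fin 3 → E2) (SG' SG'' : Set E2)
    (hSG' : IsSG p SG') (hSG'' : IsSG q SG'') (N : ℕ) (hN : 1 ≤ N)
    (hdiam : ∀ x ∈ SG' ×ˢ SG'', ∀ y ∈ SG' ×ˢ SG'', dist2 x y ≤ 1)
    (α h : Word N → Word N → E2 × E2 → ℝ)
    (f : E2 × E2 → ℝ) (hfc : ContinuousOn f (SG' ×ˢ SG''))
    (hf : ∀ ω η : Word N, ∀ t ∈ SG', ∀ s ∈ SG'',
      f (wordMap p ω t, wordMap q η s) = α ω η (t, s) * f (t, s) + h ω η (t, s))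
    (sh : ℝ) (hsh : 0 < sh ∧ sh ≤ 1) (Kh : ℝ)
    (hhHolder : ∀ ω η, HolderOn2 (SG' ×ˢ SG'') (h ω η) Kh sh)
    (sα : Word N → Word N → ℝ) (hsα : ∀ ω η, 0 < sα ω η ∧ sα ω η ≤ 1)
    (Kα : Word N → Word N → ℝ)
    (hαHolder : ∀ ω η, HolderOn2 (SG' ×ˢ SG'') (α ω η) (Kα ω η) (sα ω η))
    (hαnorm : ∀ ω η, supAbs (SG' ×ˢ SG'') (α ω η) < 1)
    (hcase : (⨆ ωη : Word N × Word N, supAbs (SG' ×ˢ SG'') (α ωη.1 ωη.2)) = 1 / 2 ^ N) :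
    ∃ μ : ℝ, 0 < μ ∧ μ < min sh (⨅ ωη : Word N × Word N, sα ωη.1 ωη.2) ∧
      ∃ C : ℝ, HolderOn2 (SG' ×ˢ SG'') f C
        (min sh (⨅ ωη : Word N × Word N, sα ωη.1 ωη.2) - μ) := by
  set s := min sh (⨅ ωη : Word N × Word N, sα ωη.1 ωη.2) with hs
  have hs0 : 0 < s := by
    refine lt_min hsh.1 ?_
    obtain ⟨i, hi⟩ := exists_eq_ciInf_of_finite (f := fun ωη : Word N × Word N => sα ωη.1 ωη.2)
    rw [← hi]
    exact (hsα _ _).1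
  have hsα' : ∀ ω η, s ≤ sα ω η := fun ω η =>
    (min_le_right _ _).trans
      (ciInf_le (f := fun ωη : Word N × Word N => sα ωη.1 ωη.2) (Set.finite_range _).bddBelow (ω, η))
  have hssh : s ≤ sh := min_le_left _ _
  have conv : ∀ (g : E2 × E2 → ℝ) (K K' γ : ℝ), s ≤ γ → |K| ≤ K' →
      HolderOn2 (SG' ×ˢ SG'') g K γ → HolderOn2 (SG' ×ˢ SG'') g K' (s - s / 2) := by
    intro g K K' γ hγ hK hg x hx y hy
    have hd0 := dist2_nonneg x y
    have e : dist2 x y ^ γ ≤ dist2 x y ^ (s - s / 2) :=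
      Real.rpow_le_rpow_of_exponent_ge_of_imp hd0 (hdiam x hx y hy) (by linarith)
        (fun _ h0 => by linarith)
    have hp : 0 ≤ dist2 x y ^ γ := by positivity
    calc _ ≤ K * dist2 x y ^ γ := hg x hx y hy
      _ ≤ K' * dist2 x y ^ γ := by
        have := (le_abs_self K).trans hK
        gcongr
      _ ≤ _ := by
        have := (abs_nonneg K).trans hK
        gcongr
  refine ⟨s / 2, by linarith, by linarith, ?_⟩
  have hsum : ∀ ω η, |Kα ω η| ≤ ∑ ω, ∑ η, |Kα ω η| := fun ω η =>
    (Finset.single_le_sum (f := fun η => |Kα ω η|) (fun _ _ => abs_nonneg _)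
      (Finset.mem_univ η)).trans
    (Finset.single_le_sum (f := fun ω => ∑ η, |Kα ω η|)
      (fun _ _ => Finset.sum_nonneg fun _ _ => abs_nonneg _) (Finset.mem_univ ω))
  refine holder_main p q SG' SG'' hSG' hSG'' N hN hdiam α h f hfc hf (s - s / 2) (by linarith)
    (by linarith [hsh.2]) |Kh| (∑ ω, ∑ η, |Kα ω η|) (abs_nonneg _) (by positivity)
    (fun ω η => conv _ _ _ _ hssh le_rfl (hhHolder ω η))
    (fun ω η => conv _ _ _ _ (hsα' ω η) (hsum ω η) (hαHolder ω η)) ?_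
  intro ω η x hx
  have hb : BddAbove ((fun x => |α ω η x|) '' (SG' ×ˢ SG'')) := by
    refine ⟨|α ω η x| + |Kα ω η|, ?_⟩
    rintro _ ⟨y, hy, rfl⟩
    have h1 := hαHolder ω η y hy x hx
    have h2 : dist2 y x ^ sα ω η ≤ 1 :=
      Real.rpow_le_one (dist2_nonneg _ _) (hdiam y hy x hx) (hsα ω η).1.le
    have h3 : 0 ≤ dist2 y x ^ sα ω η := Real.rpow_nonneg (dist2_nonneg _ _) _
    have h4 : Kα ω η * dist2 y x ^ sα ω η ≤ |Kα ω η| := by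
      nlinarith [le_abs_self (Kα ω η), abs_nonneg (Kα ω η)]
    have h5 := abs_sub_abs_le_abs_sub (α ω η y) (α ω η x)
    show |α ω η y| ≤ _
    linarith
  have h1 : |α ω η x| ≤ supAbs (SG' ×ˢ SG'') (α ω η) := le_csSup hb ⟨x, hx, rfl⟩
  have h2 := le_ciSup (f := fun ωη : Word N × Word N => supAbs (SG' ×ˢ SG'') (α ωη.1 ωη.2))
    (Set.finite_range _).bddAbove (ω, η)
  rw [hcase] at h2
  rw [one_div_pow]
  exact h1.trans h2
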